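/- For each ε > 0 there is C > 0 with the following property. Let s ∈ ℕ, β ∈ [1/2, 1], suppose that for each q with 2^s ≤ q < 2^{s+1} one is given a quadratic Dirichlet character χ_q modulo q, and let S be any subset of 𝓡_s. Then for every finitely supported f : ℤ → ℂ, ‖ sup_{n ≥ 2^{s+4}} | Σ_{a/q ∈ S} G(χ_q, a) ℱ⁻¹( M̂_{2^n}^β(· − a/q) η_s(· − a/q) f̂ ) | ‖_{ℓ²(ℤ)} ≤ C 2^{−s(1/2−ε)} ‖f‖_{ℓ²(ℤ)}, where C is independent of s, β, S and the characters χ_q. -/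

import Mathlib

open scoped BigOperators

/-- `η` is smooth, `0 ≤ η ≤ 1`, `η = 1` on `[−1/4, 1/4]`, `η = 0` off `(−1/2, 1/2)`,
and `η` is a convolution of two smooth functions supported in `(−1/2, 1/2)`. -/
def IsEta (η : ℝ → ℝ) : Prop :=
  ContDiff ℝ (⊤ : ℕ∞) η ∧ (∀ ξ, 0 ≤ η ξ ∧ η ξ ≤ 1) ∧ (∀ ξ : ℝ, |ξ| ≤ 1 / 4 → η ξ = 1) ∧
    (∀ ξ : ℝ, 1 / 2 ≤ |ξ| → η ξ = 0) ∧
    ∃ g₁ g₂ : ℝ → ℝ, ContDiff ℝ (⊤ : ℕ∞) g₁ ∧ ContDiff ℝ (⊤ : ℕ∞) g₂ ∧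
      (∀ x : ℝ, x ∉ Set.Ioo (-(1 / 2) : ℝ) (1 / 2) → g₁ x = 0) ∧
      (∀ x : ℝ, x ∉ Set.Ioo (-(1 / 2) : ℝ) (1 / 2) → g₂ x = 0) ∧
      ∀ x : ℝ, η x = ∫ y : ℝ, g₁ y * g₂ (x - y)

/-- `η_s(ξ) = η(2^{4s} ξ)`, regarded as a 1-periodic function (periodization). -/
noncomputable def etaPer (η : ℝ → ℝ) (s : ℕ) (ξ : ℝ) : ℝ :=
  ∑' k : ℤ, η (2 ^ (4 * s) * (ξ - k))

/-- The Fourier transform `f̂(ξ) = Σ_{n ∈ ℤ} f(n) e^{−2πi ξ n}`. -/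
noncomputable def fhat (f : ℤ → ℂ) (ξ : ℝ) : ℂ :=
  ∑' n : ℤ, f n * Complex.exp (-(2 * Real.pi * Complex.I * ξ * n))

/-- The inverse Fourier transform `ℱ⁻¹g(x) = ∫₀¹ g(ξ) e^{2πi ξ x} dξ`, `x ∈ ℤ`. -/
noncomputable def FinvInt (g : ℝ → ℂ) (x : ℤ) : ℂ :=
  ∫ ξ in (0 : ℝ)..1, g ξ * Complex.exp (2 * Real.pi * Complex.I * ξ * x)

/-- The multiplier `M̂_N^β(ξ) = (1/N) Σ_{n=1}^N ((n^β − (n−1)^β)/β) e^{2πi ξ n}`. -/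
noncomputable def Mhat (β : ℝ) (N : ℕ) (ξ : ℝ) : ℂ :=
  ((N : ℂ))⁻¹ * ∑ n ∈ Finset.Icc 1 N,
    (((((n : ℝ) ^ β - ((n : ℝ) - 1) ^ β) / β) : ℝ) : ℂ) *
      Complex.exp (2 * Real.pi * Complex.I * ξ * n)

/-- `A_q = {1 ≤ a ≤ q : gcd(a, q) = 1}`. -/
def Aq (q : ℕ) : Finset ℕ := (Finset.Icc 1 q).filter (fun a => Nat.Coprime a q)

/-- The normalized Gauss sum `G(χ, n) = (1/φ(q)) Σ_{r ∈ A_q} χ(r) e^{2πi r n/q}`. -/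
noncomputable def gaussG (q : ℕ) (χ : DirichletCharacter ℂ q) (n : ℤ) : ℂ :=
  ((q.totient : ℂ))⁻¹ *
    ∑ r ∈ Aq q, χ (r : ZMod q) * Complex.exp (2 * Real.pi * Complex.I * r * n / q)

/-- The fractions `a/q ∈ 𝓡_s`, encoded as pairs `(a, q)` with `a ∈ A_q`,
`2^s ≤ q < 2^{s+1}`, and `q` square-free or `4 ∣ q` with `q/4` square-free. -/
def Rset (s : ℕ) : Finset (ℕ × ℕ) :=
  (Finset.range (2 ^ (s + 1)) ×ˢ Finset.range (2 ^ (s + 1))).filter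
    (fun p => 2 ^ s ≤ p.2 ∧ 1 ≤ p.1 ∧ p.1 ≤ p.2 ∧ Nat.Coprime p.1 p.2 ∧
      (Squarefree p.2 ∨ (4 ∣ p.2 ∧ Squarefree (p.2 / 4))))


/-- running potential for the maximal inequality -/
noncomputable def potP (H : ℕ → ℝ) (l : ℝ) : ℕ → ℝ
  | 0 => 0
  | k + 1 => max 0 (H k - l + potP H l k)

lemma potP_nonneg (H : ℕ → ℝ) (l : ℝ) (k : ℕ) : 0 ≤ potP H l k := by
  cases k with
  | zero => exact le_rfl
  | succ k => exact le_max_left _ _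

/-- average of the `J + 1` values `H k, H (k-1), ..., H (k-J)` -/
noncomputable def avgB (H : ℕ → ℝ) (k J : ℕ) : ℝ :=
  (∑ j ∈ Finset.range (J + 1), H (k - j)) / (J + 1 : ℝ)

noncomputable def maxB (H : ℕ → ℝ) (k : ℕ) : ℝ :=
  (Finset.range (k + 1)).sup' ⟨0, by simp⟩ (avgB H k)

lemma avgB_le_maxB (H : ℕ → ℝ) (k J : ℕ) (h : J ≤ k) : avgB H k J ≤ maxB H k :=
  Finset.le_sup' (avgB H k) (by simp; omega)

lemma maxB_attained (H : ℕ → ℝ) (k : ℕ) : ∃ J, J ≤ k ∧ maxB H k = avgB H k J := by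
  obtain ⟨J, hJ, h⟩ := Finset.exists_mem_eq_sup' (s := Finset.range (k + 1)) ⟨0, by simp⟩ (avgB H k)
  exact ⟨J, by simp at hJ; omega, h⟩

lemma potP_ge (H : ℕ → ℝ) (l : ℝ) (k J : ℕ) (h : J ≤ k) :
    ∑ j ∈ Finset.range (J + 1), (H (k - j) - l) ≤ potP H l (k + 1) := by
  induction J generalizing k with
  | zero =>
    have := potP_nonneg H l k
    simp only [potP, zero_add, Finset.range_one, Finset.sum_singleton, Nat.sub_zero]
    exact le_max_of_le_right (by linarith)
  | succ J ih =>
    obtain ⟨k, rfl⟩ : ∃ k', k = k' + 1 := ⟨k - 1, by omega⟩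
    rw [Finset.sum_range_succ']
    have := ih k (by omega)
    have e : ∀ j, k + 1 - (j + 1) = k - j := fun j => by omega
    simp only [e, Nat.sub_zero]
    rw [potP]
    exact le_max_of_le_right (by linarith)

lemma potP_attained (H : ℕ → ℝ) (l : ℝ) (k : ℕ) : potP H l k = 0 ∨ ∃ J, J + 1 ≤ k ∧
    potP H l k = ∑ j ∈ Finset.range (J + 1), (H (k - 1 - j) - l) := by
  induction k with
  | zero => exact Or.inl rfl
  | succ k ih =>
    rw [potP]
    rcases le_total (H k - l + potP H l k) 0 with h | h
    · left; exact max_eq_left h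
    · right
      rw [max_eq_right h]
      rcases ih with h0 | ⟨J, hJ, h1⟩
      · exact ⟨0, by omega, by simp [h0]⟩
      · refine ⟨J + 1, by omega, ?_⟩
        rw [Finset.sum_range_succ' _ (J + 1), h1]
        have e : ∀ j, k + 1 - 1 - (j + 1) = k - 1 - j := fun j => by omega
        simp only [e]
        simp
        ring

lemma potP_le_sum (H : ℕ → ℝ) (l : ℝ) (L : ℕ) :
    potP H l L ≤ ∑ k ∈ Finset.range L, if l < maxB H k then H k - l else 0 := by
  induction L with
  | zero => simp [potP]
  | succ L ih =>
    rw [Finset.sum_range_succ]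
    split_ifs with h
    · obtain ⟨J, hJ, hm⟩ := maxB_attained H L
      have h1 := potP_ge H l L J hJ
      have h2 : 0 < ∑ j ∈ Finset.range (J + 1), (H (L - j) - l) := by
        rw [hm, avgB, lt_div_iff₀ (by positivity)] at h
        rw [Finset.sum_sub_distrib]
        simp
        linarith
      have h3 : 0 < potP H l (L + 1) := by linarith
      rw [potP] at h3 ⊢
      rcases lt_max_iff.1 h3 with h4 | h4
      · exact absurd h4 (lt_irrefl _)
      · rw [max_eq_right h4.le]; linarith
    · push Not at h
      rcases potP_attained H l (L + 1) with h0 | ⟨J, hJ, h1⟩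
      · rw [h0]; linarith [potP_nonneg H l L]
      · have h2 := avgB_le_maxB H L J (by omega)
        have h3 : avgB H L J ≤ l := h2.trans h
        rw [avgB, div_le_iff₀ (by positivity)] at h3
        rw [h1, Finset.sum_sub_distrib]
        simp
        linarith [potP_nonneg H l L]

lemma maxB_sq (H : ℕ → ℝ) (hH : ∀ k, 0 ≤ H k) (L : ℕ) :
    ∑ k ∈ Finset.range L, maxB H k ^ 2 ≤ 2 * ∑ k ∈ Finset.range L, H k * maxB H k := by
  have hM : ∀ k, 0 ≤ maxB H k := fun k => by
    refine le_trans ?_ (avgB_le_maxB H k 0 (by omega))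
    unfold avgB
    simp [hH]
  obtain ⟨B, hB⟩ : ∃ B : ℝ, ∀ k ∈ Finset.range L, maxB H k ≤ B :=
    ⟨∑ k ∈ Finset.range L, maxB H k, fun k hk =>
      Finset.single_le_sum (f := maxB H) (fun i _ => hM i) hk⟩
  rcases Nat.eq_zero_or_pos L with rfl | hL
  · simp
  have hB0 : 0 ≤ B := (hM 0).trans (hB 0 (by simpa using hL))
  have hint : ∀ k ∈ Finset.range L, IntervalIntegrable
      (fun l => if l < maxB H k then H k - l else 0) MeasureTheory.volume 0 B := by
    intro k hk
    have h1 : IntervalIntegrable (fun l : ℝ => H k - l) MeasureTheory.volume 0 B :=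
      (by fun_prop : Continuous (fun l : ℝ => H k - l)).intervalIntegrable _ _
    rw [intervalIntegrable_iff] at h1 ⊢
    have h2 := MeasureTheory.Integrable.indicator (s := Set.Iio (maxB H k)) h1 measurableSet_Iio
    refine MeasureTheory.Integrable.congr h2
      (Filter.Eventually.of_forall fun l => by simp [Set.indicator_apply])
  have hval : ∀ k ∈ Finset.range L, ∫ l in (0:ℝ)..B, (if l < maxB H k then H k - l else 0)
      = H k * maxB H k - maxB H k ^ 2 / 2 := by
    intro k hk
    have hk' := hB k hk
    have hi := hint k hk
    rw [← intervalIntegral.integral_add_adjacent_intervals (b := maxB H k)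
      (hi.mono_set (by rw [Set.uIcc_of_le (hM k), Set.uIcc_of_le hB0]; exact Set.Icc_subset_Icc_right hk'))
      (hi.mono_set (by rw [Set.uIcc_of_le hk', Set.uIcc_of_le hB0]; exact Set.Icc_subset_Icc_left (hM k)))]
    have e2 : ∫ l in (maxB H k)..B, (if l < maxB H k then H k - l else 0) = 0 := by
      rw [intervalIntegral.integral_congr (g := fun _ => (0:ℝ))]
      · simp
      · intro l hl
        rw [Set.uIcc_of_le hk'] at hl
        simp [hl.1.not_gt]
    have e1 : ∫ l in (0:ℝ)..(maxB H k), (if l < maxB H k then H k - l else 0)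
        = ∫ l in (0:ℝ)..(maxB H k), (H k - l) := by
      rw [intervalIntegral.integral_of_le (hM k), intervalIntegral.integral_of_le (hM k),
        MeasureTheory.integral_Ioc_eq_integral_Ioo, MeasureTheory.integral_Ioc_eq_integral_Ioo]
      apply MeasureTheory.setIntegral_congr_fun measurableSet_Ioo
      intro l hl
      simp [hl.2]
    rw [e1, e2, intervalIntegral.integral_sub (by simp) (by simp)]
    simp
    ring
  have h0 : 0 ≤ ∫ l in (0:ℝ)..B, ∑ k ∈ Finset.range L, (if l < maxB H k then H k - l else 0) :=
    intervalIntegral.integral_nonneg hB0 fun l _ => (potP_nonneg H l L).trans (potP_le_sum H l L)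
  rw [intervalIntegral.integral_finsetSum hint, Finset.sum_congr rfl hval, Finset.sum_sub_distrib,
    ← Finset.sum_div] at h0
  linarith

lemma maxB_l2 (H : ℕ → ℝ) (hH : ∀ k, 0 ≤ H k) (L : ℕ) :
    ∑ k ∈ Finset.range L, maxB H k ^ 2 ≤ 4 * ∑ k ∈ Finset.range L, H k ^ 2 := by
  have h1 := maxB_sq H hH L
  have h2 : ∑ k ∈ Finset.range L, H k * maxB H k ≤
      ∑ k ∈ Finset.range L, (H k ^ 2 + maxB H k ^ 2 / 4) :=
    Finset.sum_le_sum fun k _ => by nlinarith [sq_nonneg (H k - maxB H k / 2)]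
  rw [Finset.sum_add_distrib, ← Finset.sum_div] at h2
  linarith

lemma HL_int (G : ℤ → ℝ) (hG : ∀ y, 0 ≤ G y) (F : Finset ℤ) (J : ℤ → ℕ) :
    ∃ T : Finset ℤ, ∑ y ∈ F, ((∑ j ∈ Finset.range (J y + 1), G (y + j)) / (J y + 1 : ℝ)) ^ 2
      ≤ 4 * ∑ t ∈ T, G t ^ 2 := by
  obtain ⟨b, hb⟩ : ∃ b : ℤ, ∀ y ∈ F, y + J y ≤ b := by
    obtain ⟨b, hb⟩ := (F.image fun y => y + (J y : ℤ)).bddAbove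
    exact ⟨b, fun y hy => hb (by simpa using ⟨y, hy, rfl⟩)⟩
  obtain ⟨L, hL⟩ : ∃ L : ℕ, ∀ y ∈ F, (b - y).toNat < L := by
    obtain ⟨b', hb'⟩ := (F.image fun y => (b - y).toNat).bddAbove
    exact ⟨b' + 1, fun y hy => Nat.lt_succ_of_le (hb' (by simpa using ⟨y, hy, rfl⟩))⟩
  set H : ℕ → ℝ := fun k => G (b - k) with hHdef
  refine ⟨(Finset.range L).image (fun k : ℕ => b - (k : ℤ)), ?_⟩
  rw [Finset.sum_image (by intro x _ y _ h; simpa using h)]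
  refine le_trans ?_ (maxB_l2 H (fun k => hG _) L)
  have hinj : Set.InjOn (fun y : ℤ => (b - y).toNat) F := by
    intro x hx y hy h
    have := hb x hx; have := hb y hy
    simp only at h
    omega
  have step : ∀ y ∈ F, ((∑ j ∈ Finset.range (J y + 1), G (y + j)) / (J y + 1 : ℝ)) ^ 2
      ≤ maxB H (b - y).toNat ^ 2 := by
    intro y hy
    have hy' := hb y hy
    have : (∑ j ∈ Finset.range (J y + 1), G (y + j)) / (J y + 1 : ℝ)
        = avgB H (b - y).toNat (J y) := by
      unfold avgB
      congr 1
      apply Finset.sum_congr rfl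
      intro j hj
      simp only [Finset.mem_range] at hj
      simp only [hHdef]
      congr 1
      omega
    rw [this]
    have h0 : 0 ≤ avgB H (b - y).toNat (J y) := by
      unfold avgB
      exact div_nonneg (Finset.sum_nonneg fun _ _ => hG _) (by positivity)
    exact pow_le_pow_left₀ h0 (avgB_le_maxB _ _ _ (by omega)) 2
  refine (Finset.sum_le_sum step).trans ?_
  rw [← Finset.sum_image (f := fun k => maxB H k ^ 2) hinj]
  apply Finset.sum_le_sum_of_subset_of_nonneg
  · intro k hk
    simp only [Finset.mem_image] at hk
    obtain ⟨y, hy, rfl⟩ := hk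
    simpa using hL y hy
  · intros; positivity

lemma prod_one_sub_inv (P : Finset ℕ) (hP : ∀ p ∈ P, 2 ≤ p) :
    1 / ((P.card : ℝ) + 1) ≤ ∏ p ∈ P, (1 - (p : ℝ)⁻¹) := by
  induction P using Finset.induction_on_max with
  | empty => simp
  | insert m P hm ih =>
    have hmP : m ∉ P := fun h => lt_irrefl _ (hm m h)
    rw [Finset.prod_insert hmP, Finset.card_insert_of_notMem hmP]
    have ih' := ih (fun p hp => hP p (Finset.mem_insert_of_mem hp))
    have hcard : P.card + 2 ≤ m := by
      have hsub : P ⊆ Finset.Ico 2 m := fun p hp => by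
        simp only [Finset.mem_Ico]
        exact ⟨hP p (Finset.mem_insert_of_mem hp), hm p hp⟩
      have := Finset.card_le_card hsub
      have h2 := hP m (Finset.mem_insert_self _ _)
      simp at this
      omega
    have hc : ((P.card : ℝ) + 2) ≤ m := by exact_mod_cast hcard
    have hk : (0 : ℝ) ≤ P.card := by positivity
    have h1 : ((P.card : ℝ) + 1) / (P.card + 2) ≤ 1 - (m : ℝ)⁻¹ := by
      have : (m : ℝ)⁻¹ ≤ ((P.card : ℝ) + 2)⁻¹ := inv_anti₀ (by positivity) hc
      have e : ((P.card : ℝ) + 1) / (P.card + 2) = 1 - ((P.card : ℝ) + 2)⁻¹ := by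
        field_simp; ring
      linarith
    push_cast
    calc 1 / ((P.card : ℝ) + 1 + 1)
        = ((P.card : ℝ) + 1) / (P.card + 2) * (1 / ((P.card : ℝ) + 1)) := by
          field_simp; ring
      _ ≤ _ := mul_le_mul h1 ih' (by positivity) (le_trans (by positivity) h1)

lemma totient_lower (s q : ℕ) (hq : 0 < q) (hqs : q < 2 ^ (s + 1)) :
    (q : ℝ) / (s + 1) ≤ q.totient := by
  have h1 : ((q.totient : ℚ) : ℝ) = q * ∏ p ∈ q.primeFactors, (1 - (p : ℝ)⁻¹) := by
    rw [Nat.totient_eq_mul_prod_factors]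
    push_cast
    rfl
  have h2 := prod_one_sub_inv q.primeFactors fun p hp => (Nat.prime_of_mem_primeFactors hp).two_le
  have h3 : q.primeFactors.card ≤ s := by
    have a1 : 2 ^ q.primeFactors.card ≤ ∏ p ∈ q.primeFactors, p :=
      Finset.pow_card_le_prod _ _ _ fun p hp => (Nat.prime_of_mem_primeFactors hp).two_le
    have a2 : ∏ p ∈ q.primeFactors, p ≤ q := Nat.le_of_dvd hq (Nat.prod_primeFactors_dvd q)
    have a3 := (a1.trans a2).trans_lt hqs
    have := (Nat.pow_lt_pow_iff_right (by norm_num)).1 a3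
    omega
  have h4 : 1 / ((s : ℝ) + 1) ≤ 1 / ((q.primeFactors.card : ℝ) + 1) := by
    apply one_div_le_one_div_of_le (by positivity)
    have : (q.primeFactors.card : ℝ) ≤ s := by exact_mod_cast h3
    linarith
  have h5 : (q.totient : ℝ) = ((q.totient : ℚ) : ℝ) := by norm_cast
  rw [h5, h1, div_eq_mul_one_div]
  exact mul_le_mul_of_nonneg_left (h4.trans h2) (by positivity)

lemma gaussSum_norm_le (q : ℕ) [NeZero q] (χ : DirichletCharacter ℂ q) (u : (ZMod q)ˣ) :
    ‖gaussSum χ ((ZMod.stdAddChar (N := q)).mulShift u)‖ ^ 2 ≤ q := by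
  set c : ZMod q → ℂ := fun b => ∑ x : ZMod q, χ x * ZMod.stdAddChar (b * x) with hc
  have hcu : ∀ v : (ZMod q)ˣ, ‖c v‖ = ‖gaussSum χ (ZMod.stdAddChar (N := q))‖ := by
    intro v
    have h := gaussSum_mulShift χ (ZMod.stdAddChar (N := q)) v
    have h2 : gaussSum χ ((ZMod.stdAddChar (N := q)).mulShift v) = c v := by
      simp [gaussSum, hc, AddChar.mulShift_apply]
    rw [← h, h2, norm_mul, DirichletCharacter.unit_norm_eq_one χ v, one_mul]
  have hcu' : ‖gaussSum χ ((ZMod.stdAddChar (N := q)).mulShift u)‖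
      = ‖gaussSum χ (ZMod.stdAddChar (N := q))‖ := by
    rw [← hcu u]
    simp [gaussSum, hc, AddChar.mulShift_apply]
  have pars : ∑ b : ZMod q, c b * (starRingEnd ℂ) (c b)
      = q * ∑ x : ZMod q, χ x * (starRingEnd ℂ) (χ x) := by
    have e1 : ∀ b, c b * (starRingEnd ℂ) (c b) = ∑ x : ZMod q, ∑ y : ZMod q,
        χ x * (starRingEnd ℂ) (χ y) * ZMod.stdAddChar (b * (x - y)) := by
      intro b
      simp only [hc, map_sum, map_mul]
      rw [Finset.sum_mul_sum]
      refine Finset.sum_congr rfl fun x _ => Finset.sum_congr rfl fun y _ => ?_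
      rw [mul_sub, sub_eq_add_neg, AddChar.map_add_eq_mul, AddChar.map_neg_eq_conj]
      ring
    simp only [e1]
    rw [Finset.sum_comm, Finset.mul_sum]
    refine Finset.sum_congr rfl fun x _ => ?_
    rw [Finset.sum_comm]
    simp only [← Finset.mul_sum]
    simp only [AddChar.sum_mulShift _ (ZMod.isPrimitive_stdAddChar q), sub_eq_zero, ZMod.card]
    simp
    ring
  have hz : ∀ z : ℂ, z * (starRingEnd ℂ) z = ((‖z‖ ^ 2 : ℝ) : ℂ) := fun z => by
    rw [Complex.mul_conj, Complex.normSq_eq_norm_sq]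
  simp only [hz] at pars
  have pars' : ∑ b : ZMod q, ‖c b‖ ^ 2 = q * ∑ x : ZMod q, ‖χ x‖ ^ 2 := by exact_mod_cast pars
  have hχ : ∑ x : ZMod q, ‖χ x‖ ^ 2 = q.totient := by
    rw [← ZMod.card_units_eq_totient]
    have : ∑ x : ZMod q, ‖χ x‖ ^ 2 = ∑ x ∈ Finset.univ.image (fun v : (ZMod q)ˣ => (v : ZMod q)), ‖χ x‖ ^ 2 := by
      symm
      apply Finset.sum_subset (Finset.subset_univ _)
      intro x _ hx
      have : ¬ IsUnit x := fun ⟨v, hv⟩ => hx (by simp [← hv])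
      simp [χ.map_nonunit this]
    rw [this, Finset.sum_image (fun a _ b _ h => Units.ext h)]
    simp [DirichletCharacter.unit_norm_eq_one]
  have hle : ∑ v : (ZMod q)ˣ, ‖c v‖ ^ 2 ≤ ∑ b : ZMod q, ‖c b‖ ^ 2 := by
    rw [← Finset.sum_image (f := fun b => ‖c b‖ ^ 2) (g := fun v : (ZMod q)ˣ => (v : ZMod q))
      (fun a _ b _ h => Units.ext h)]
    exact Finset.sum_le_univ_sum_of_nonneg fun _ => by positivity
  rw [pars', hχ] at hle
  simp only [hcu, Finset.sum_const, Finset.card_univ, ZMod.card_units_eq_totient, nsmul_eq_mul] at hle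
  rw [hcu']
  have hpos : (0 : ℝ) < q.totient := by exact_mod_cast Nat.totient_pos.2 (NeZero.pos q)
  nlinarith

lemma gaussG_eq (q : ℕ) [NeZero q] (χ : DirichletCharacter ℂ q) (n : ℤ) (u : (ZMod q)ˣ)
    (hu : (u : ZMod q) = n) :
    gaussG q χ n = (q.totient : ℂ)⁻¹ * gaussSum χ ((ZMod.stdAddChar (N := q)).mulShift u) := by
  unfold gaussG
  congr 1
  have h1 : ∑ r ∈ Aq q, χ (r : ZMod q) * Complex.exp (2 * Real.pi * Complex.I * r * n / q)
      = ∑ r ∈ Finset.Icc 1 q, χ (r : ZMod q) * Complex.exp (2 * Real.pi * Complex.I * r * n / q) := by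
    apply Finset.sum_subset (Finset.filter_subset _ _)
    intro r hr hr'
    have : ¬ IsUnit (r : ZMod q) := by
      rw [ZMod.isUnit_iff_coprime]
      intro h
      exact hr' (Finset.mem_filter.2 ⟨hr, h⟩)
    rw [χ.map_nonunit this, zero_mul]
  rw [h1, gaussSum]
  refine Finset.sum_nbij (fun r => (r : ZMod q)) (fun _ _ => Finset.mem_univ _) ?_ ?_ ?_
  · intro a ha b hb h
    simp only [Finset.coe_Icc, Set.mem_Icc] at ha hb
    simp only at h
    rw [ZMod.natCast_eq_natCast_iff'] at h
    rcases ha.2.eq_or_lt with h1 | h1 <;> rcases hb.2.eq_or_lt with h2 | h2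
    · omega
    · rw [h1, Nat.mod_self, Nat.mod_eq_of_lt h2] at h; omega
    · rw [h2, Nat.mod_self, Nat.mod_eq_of_lt h1] at h; omega
    · rwa [Nat.mod_eq_of_lt h2, Nat.mod_eq_of_lt h1] at h
  · intro x _
    have hx := ZMod.val_lt x
    rcases Nat.eq_zero_or_pos x.val with h0 | h0
    · refine ⟨q, by simp; exact NeZero.one_le, ?_⟩
      simp [(ZMod.val_eq_zero x).1 h0]
    · exact ⟨x.val, by simp; omega, by simp⟩
  · intro r hr
    congr 1
    rw [AddChar.mulShift_apply, hu]
    have : ((n : ZMod q) * (r : ZMod q)) = ((n * r : ℤ) : ZMod q) := by push_cast; rfl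
    rw [this, ZMod.stdAddChar_coe]
    congr 1
    push_cast
    ring

lemma gaussG_bound (s q a : ℕ) (h1 : 2 ^ s ≤ q) (h2 : q < 2 ^ (s + 1)) (ha : Nat.Coprime a q)
    (χ : DirichletCharacter ℂ q) :
    ‖gaussG q χ (a : ℤ)‖ ^ 2 ≤ ((s : ℝ) + 1) ^ 2 / 2 ^ s := by
  have hq : 0 < q := lt_of_lt_of_le (by positivity) h1
  have : NeZero q := ⟨hq.ne'⟩
  rw [gaussG_eq q χ a (ZMod.unitOfCoprime a ha) (by simp), norm_mul, mul_pow]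
  have hb := gaussSum_norm_le q χ (ZMod.unitOfCoprime a ha)
  have ht := totient_lower s q hq h2
  have hq' : (0 : ℝ) < q := by exact_mod_cast hq
  have hq2 : (2 : ℝ) ^ s ≤ q := by exact_mod_cast h1
  have hs : (0 : ℝ) < (s : ℝ) + 1 := by positivity
  have ht0 : (0 : ℝ) < q.totient := lt_of_lt_of_le (by positivity) ht
  have h3 : ‖((q.totient : ℂ))⁻¹‖ ^ 2 ≤ (((s : ℝ) + 1) / q) ^ 2 := by
    rw [norm_inv, Complex.norm_natCast]
    apply pow_le_pow_left₀ (by positivity)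
    rw [← inv_div]
    exact inv_anti₀ (by positivity) ht
  calc _ ≤ (((s : ℝ) + 1) / q) ^ 2 * q := mul_le_mul h3 hb (by positivity) (by positivity)
    _ = ((s : ℝ) + 1) ^ 2 / q := by field_simp
    _ ≤ _ := by gcongr

/-- `e(t) = exp(2 π i t)` -/
noncomputable def ee (t : ℝ) : ℂ := Complex.exp (2 * Real.pi * Complex.I * t)

lemma ee_add (a b : ℝ) : ee (a + b) = ee a * ee b := by
  unfold ee
  rw [← Complex.exp_add]
  push_cast
  ring_nf

lemma norm_ee (a : ℝ) : ‖ee a‖ = 1 := by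
  have : (2 * Real.pi * Complex.I * a : ℂ) = ((2 * Real.pi * a : ℝ) : ℂ) * Complex.I := by
    push_cast; ring
  rw [ee, this, Complex.norm_exp_ofReal_mul_I]

lemma conj_ee (a : ℝ) : (starRingEnd ℂ) (ee a) = ee (-a) := by
  unfold ee
  rw [← Complex.exp_conj]
  have h2 : (starRingEnd ℂ) (2 : ℂ) = 2 := Complex.conj_ofNat 2
  simp [h2]

lemma ee_int (k : ℤ) : ee k = 1 := by
  unfold ee
  rw [Complex.exp_eq_one_iff]
  exact ⟨k, by push_cast; ring⟩

lemma continuous_ee : Continuous ee := by unfold ee; fun_prop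

lemma integral_ee (k : ℤ) : ∫ ξ in (0 : ℝ)..1, ee (k * ξ) = if k = 0 then 1 else 0 := by
  split_ifs with h
  · subst h
    simp [ee]
  · have hc : (2 * Real.pi * Complex.I * k : ℂ) ≠ 0 := by
      simp [Real.pi_ne_zero, h]
    have := integral_exp_mul_complex (a := 0) (b := 1) hc
    have e : (fun ξ : ℝ => ee (k * ξ)) = fun ξ : ℝ => Complex.exp (2 * Real.pi * Complex.I * k * ξ) := by
      funext ξ; unfold ee; push_cast; ring_nf
    rw [e, this]
    have h1 := ee_int k
    unfold ee at h1
    push_cast at h1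
    simp [h1]

lemma sum_mul_conj_expand (T : Finset ℤ) (a : ℤ → ℂ) (ξ : ℝ) :
    ((‖∑ z ∈ T, a z * ee (-(z * ξ))‖ ^ 2 : ℝ) : ℂ)
      = ∑ z ∈ T, ∑ w ∈ T, a z * (starRingEnd ℂ) (a w) * ee (((w - z : ℤ) : ℝ) * ξ) := by
  rw [← Complex.normSq_eq_norm_sq, ← Complex.mul_conj, map_sum, Finset.sum_mul_sum]
  refine Finset.sum_congr rfl fun z _ => Finset.sum_congr rfl fun w _ => ?_
  rw [map_mul, conj_ee]
  have : ((w - z : ℤ) : ℝ) * ξ = -(z * ξ) + - -(w * ξ) := by push_cast; ring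
  rw [this, ee_add]
  ring

lemma continuous_trig (T : Finset ℤ) (a : ℤ → ℂ) :
    Continuous fun ξ : ℝ => ∑ z ∈ T, a z * ee (-(z * ξ)) := by
  apply continuous_finsetSum
  intro z _
  exact continuous_const.mul (continuous_ee.comp (by fun_prop))

lemma ii_sum {ι E : Type*} [NormedAddCommGroup E] (S : Finset ι) {g : ι → ℝ → E}
    (h : ∀ i ∈ S, IntervalIntegrable (g i) MeasureTheory.volume 0 1) :
    IntervalIntegrable (fun ξ => ∑ i ∈ S, g i ξ) MeasureTheory.volume 0 1 := by
  have := IntervalIntegrable.sum S h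
  rwa [show (∑ i ∈ S, g i) = fun ξ => ∑ i ∈ S, g i ξ from funext fun ξ => by simp] at this

lemma parseval_fin (T : Finset ℤ) (a : ℤ → ℂ) :
    ∫ ξ in (0 : ℝ)..1, ‖∑ z ∈ T, a z * ee (-(z * ξ))‖ ^ 2 = ∑ z ∈ T, ‖a z‖ ^ 2 := by
  have hi : ∀ z w : ℤ, IntervalIntegrable
      (fun ξ : ℝ => a z * (starRingEnd ℂ) (a w) * ee (((w - z : ℤ) : ℝ) * ξ))
      MeasureTheory.volume 0 1 := fun z w =>
    (continuous_const.mul (continuous_ee.comp (by fun_prop))).intervalIntegrable _ _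
  have h : ((∫ ξ in (0 : ℝ)..1, ‖∑ z ∈ T, a z * ee (-(z * ξ))‖ ^ 2 : ℝ) : ℂ)
      = ((∑ z ∈ T, ‖a z‖ ^ 2 : ℝ) : ℂ) := by
    rw [← intervalIntegral.integral_ofReal]
    simp only [sum_mul_conj_expand]
    rw [intervalIntegral.integral_finsetSum (fun z _ => ii_sum _ fun w _ => hi z w)]
    rw [Complex.ofReal_sum]
    refine Finset.sum_congr rfl fun z hz => ?_
    rw [intervalIntegral.integral_finsetSum (fun w _ => hi z w)]
    simp only [intervalIntegral.integral_const_mul, integral_ee, sub_eq_zero]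
    simp [hz, Complex.mul_conj, Complex.normSq_eq_norm_sq]
  exact_mod_cast h

lemma bdd_int {E : Type*} [NormedAddCommGroup E] [MeasurableSpace E] [BorelSpace E]
    [SecondCountableTopology E] {g : ℝ → E} (hg : Measurable g) (B : ℝ) (hB : ∀ ξ, ‖g ξ‖ ≤ B) :
    IntervalIntegrable g MeasureTheory.volume 0 1 := by
  rw [intervalIntegrable_iff]
  exact MeasureTheory.IntegrableOn.of_bound (by simp) hg.aestronglyMeasurable B
    (Filter.Eventually.of_forall hB)

lemma FinvInt_eq (g : ℝ → ℂ) (z : ℤ) : FinvInt g z = ∫ ξ in (0 : ℝ)..1, g ξ * ee (z * ξ) := by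
  unfold FinvInt ee
  congr 1
  funext ξ
  push_cast
  ring_nf

lemma bessel (g : ℝ → ℂ) (hg : Measurable g) (B : ℝ) (hB : ∀ ξ, ‖g ξ‖ ≤ B) (T : Finset ℤ) :
    ∑ z ∈ T, ‖FinvInt g z‖ ^ 2 ≤ ∫ ξ in (0 : ℝ)..1, ‖g ξ‖ ^ 2 := by
  set a : ℤ → ℂ := fun z => FinvInt g z with ha
  set P : ℝ → ℂ := fun ξ => ∑ z ∈ T, a z * ee (-(z * ξ)) with hP
  have hPc : Continuous P := continuous_trig T a
  have hPp : ∫ ξ in (0 : ℝ)..1, ‖P ξ‖ ^ 2 = ∑ z ∈ T, ‖a z‖ ^ 2 := parseval_fin T a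
  have hB0 : 0 ≤ B := (norm_nonneg _).trans (hB 0)
  have hme : ∀ z : ℤ, Measurable fun ξ : ℝ => ee (z * ξ) := fun z =>
    (continuous_ee.comp (by fun_prop)).measurable
  have hgz : ∀ z : ℤ, IntervalIntegrable (fun ξ => g ξ * ee (z * ξ)) MeasureTheory.volume 0 1 :=
    fun z => bdd_int (hg.mul (hme z)) B fun ξ => by rw [norm_mul, norm_ee, mul_one]; exact hB ξ
  have hgP : ∀ ξ, g ξ * (starRingEnd ℂ) (P ξ)
      = ∑ z ∈ T, (starRingEnd ℂ) (a z) * (g ξ * ee (z * ξ)) := by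
    intro ξ
    simp only [hP, map_sum, map_mul, conj_ee, neg_neg, Finset.mul_sum]
    refine Finset.sum_congr rfl fun z _ => by ring
  have hgPi : IntervalIntegrable (fun ξ => g ξ * (starRingEnd ℂ) (P ξ)) MeasureTheory.volume 0 1 := by
    simp only [hgP]
    exact ii_sum _ fun z _ => (hgz z).const_mul _
  have hcross : ∫ ξ in (0 : ℝ)..1, (g ξ * (starRingEnd ℂ) (P ξ))
      = ((∑ z ∈ T, ‖a z‖ ^ 2 : ℝ) : ℂ) := by
    simp only [hgP]
    rw [intervalIntegral.integral_finsetSum (fun z _ => (hgz z).const_mul _), Complex.ofReal_sum]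
    refine Finset.sum_congr rfl fun z _ => ?_
    rw [intervalIntegral.integral_const_mul, ← FinvInt_eq, mul_comm, Complex.mul_conj,
      Complex.normSq_eq_norm_sq]
  have hcrossR : ∫ ξ in (0 : ℝ)..1, (g ξ * (starRingEnd ℂ) (P ξ)).re = ∑ z ∈ T, ‖a z‖ ^ 2 := by
    have := intervalIntegral.intervalIntegral_re (𝕜 := ℂ) hgPi
    simp only [RCLike.re_to_complex] at this
    rw [this, hcross, Complex.ofReal_re]
  have hg2 : IntervalIntegrable (fun ξ => ‖g ξ‖ ^ 2) MeasureTheory.volume 0 1 :=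
    bdd_int (hg.norm.pow_const 2) (B ^ 2) fun ξ => by
      rw [Real.norm_of_nonneg (by positivity)]
      exact pow_le_pow_left₀ (norm_nonneg _) (hB ξ) 2
  have hP2 : IntervalIntegrable (fun ξ => ‖P ξ‖ ^ 2) MeasureTheory.volume 0 1 :=
    (hPc.norm.pow 2).intervalIntegrable _ _
  have hreI : IntervalIntegrable (fun ξ => (g ξ * (starRingEnd ℂ) (P ξ)).re)
      MeasureTheory.volume 0 1 := by
    rw [intervalIntegrable_iff] at hgPi ⊢
    exact hgPi.re
  have h0 : 0 ≤ ∫ ξ in (0 : ℝ)..1,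
      (‖g ξ‖ ^ 2 + ‖P ξ‖ ^ 2 - 2 * (g ξ * (starRingEnd ℂ) (P ξ)).re) := by
    apply intervalIntegral.integral_nonneg zero_le_one
    intro ξ _
    have := Complex.normSq_sub (g ξ) (P ξ)
    simp only [Complex.normSq_eq_norm_sq] at this
    rw [← this]
    positivity
  rw [intervalIntegral.integral_sub (hg2.add hP2) (hreI.const_mul 2),
    intervalIntegral.integral_add hg2 hP2, intervalIntegral.integral_const_mul, hcrossR, hPp] at h0
  linarith

lemma etaPer_eq (η : ℝ → ℝ) (hη : IsEta η) (s : ℕ) (ξ : ℝ) :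
    etaPer η s ξ = η (2 ^ (4 * s) * (ξ - round ξ)) := by
  unfold etaPer
  apply tsum_eq_single
  intro k hk
  apply hη.2.2.2.1
  have h1 : |ξ - round ξ| ≤ 1 / 2 := abs_sub_round ξ
  have h2 : (1 : ℝ) ≤ |((round ξ : ℤ) : ℝ) - k| := by
    have : (1 : ℤ) ≤ |round ξ - k| := Int.one_le_abs (sub_ne_zero.2 hk.symm)
    exact_mod_cast this
  have h3 : |((round ξ : ℤ) : ℝ) - k| ≤ |ξ - round ξ| + |ξ - k| := by
    have := abs_sub_le ((round ξ : ℤ) : ℝ) ξ k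
    rwa [abs_sub_comm ((round ξ : ℤ) : ℝ) ξ] at this
  have h4 : (1 : ℝ) ≤ 2 ^ (4 * s) := one_le_pow₀ (by norm_num)
  rw [abs_mul, abs_of_pos (by positivity : (0 : ℝ) < 2 ^ (4 * s))]
  nlinarith [abs_nonneg (ξ - k)]

lemma etaPer_measurable (η : ℝ → ℝ) (hη : IsEta η) (s : ℕ) : Measurable (etaPer η s) := by
  have : etaPer η s = fun ξ => η (2 ^ (4 * s) * (ξ - round ξ)) := funext (etaPer_eq η hη s)
  rw [this]
  have hr : Measurable fun ξ : ℝ => ((round ξ : ℤ) : ℝ) := by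
    have : (fun ξ : ℝ => ((round ξ : ℤ) : ℝ)) = fun ξ : ℝ => ((⌊ξ + 1 / 2⌋ : ℤ) : ℝ) := by
      funext ξ; rw [round_eq]
    rw [this]
    exact (measurable_from_top (f := fun k : ℤ => (k : ℝ))).comp
      (Int.measurable_floor.comp (measurable_id.add_const _))
  exact hη.1.continuous.measurable.comp (measurable_const.mul (measurable_id.sub hr))

lemma etaPer_bounds (η : ℝ → ℝ) (hη : IsEta η) (s : ℕ) (ξ : ℝ) :
    0 ≤ etaPer η s ξ ∧ etaPer η s ξ ≤ 1 := by
  rw [etaPer_eq η hη]; exact hη.2.1 _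

lemma etaPer_supp (η : ℝ → ℝ) (hη : IsEta η) (s : ℕ) (ξ : ℝ) (h : etaPer η s ξ ≠ 0) :
    2 ^ (4 * s) * |ξ - round ξ| < 1 / 2 := by
  rw [etaPer_eq η hη] at h
  by_contra hc
  push Not at hc
  apply h
  apply hη.2.2.2.1
  rwa [abs_mul, abs_of_pos (by positivity : (0 : ℝ) < 2 ^ (4 * s))]

lemma frac_ne_int (s : ℕ) (p p' : ℕ × ℕ) (hp : p ∈ Rset s) (hp' : p' ∈ Rset s)
    (k : ℤ) (h : (p.1 : ℤ) * p'.2 - p'.1 * p.2 = k * (p.2 * p'.2)) : p = p' := by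
  obtain ⟨a, q⟩ := p
  obtain ⟨b, r⟩ := p'
  simp only [Rset, Finset.mem_filter, Finset.mem_product, Finset.mem_range] at hp hp' h
  obtain ⟨-, h1, h2, h3, h4, -⟩ := hp
  obtain ⟨-, g1, g2, g3, g4, -⟩ := hp'
  have hk : k = 0 := by
    have hq : (1 : ℤ) ≤ q := by omega
    have hr : (1 : ℤ) ≤ r := by omega
    have ha1 : (1 : ℤ) ≤ a := by omega
    have ha2 : (a : ℤ) ≤ q := by omega
    have hb1 : (1 : ℤ) ≤ b := by omega
    have hb2 : (b : ℤ) ≤ r := by omega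
    have hqr : (0 : ℤ) < q * r := by positivity
    have e1 : (a : ℤ) * r ≤ q * r := by nlinarith
    have e2 : (0 : ℤ) < a * r := by positivity
    have e3 : (b : ℤ) * q ≤ q * r := by nlinarith
    have e4 : (0 : ℤ) < b * q := by positivity
    have : k < 1 := by
      by_contra hc
      push Not at hc
      nlinarith
    have : -1 < k := by
      by_contra hc
      push Not at hc
      nlinarith
    omega
  rw [hk, zero_mul, sub_eq_zero] at h
  have h' : a * r = b * q := by exact_mod_cast h
  have hqr : q ∣ r := h4.symm.dvd_of_dvd_mul_left (by rw [h']; exact dvd_mul_left _ _)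
  have hrq : r ∣ q := g4.symm.dvd_of_dvd_mul_left (by rw [← h']; exact dvd_mul_left _ _)
  have e := Nat.dvd_antisymm hqr hrq
  subst e
  have : a = b := Nat.eq_of_mul_eq_mul_right (by omega) h'
  rw [this]

lemma frac_sep (s : ℕ) (hs : 1 ≤ s) (p p' : ℕ × ℕ) (hp : p ∈ Rset s) (hp' : p' ∈ Rset s)
    (k : ℤ) (h : 2 ^ (4 * s) * |(p.1 : ℝ) / p.2 - (p'.1 : ℝ) / p'.2 - k| < 1) : p = p' := by
  apply frac_ne_int s p p' hp hp' k
  have hp2 := hp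
  have hp2' := hp'
  simp only [Rset, Finset.mem_filter, Finset.mem_product, Finset.mem_range] at hp hp'
  have hq0 : 0 < p.2 := by omega
  have hq0' : 0 < p'.2 := by omega
  have hq : (0 : ℝ) < p.2 := by exact_mod_cast hq0
  have hq' : (0 : ℝ) < p'.2 := by exact_mod_cast hq0'
  set d : ℤ := (p.1 : ℤ) * p'.2 - p'.1 * p.2 - k * (p.2 * p'.2) with hd
  have e : (p.1 : ℝ) / p.2 - (p'.1 : ℝ) / p'.2 - k = d / (p.2 * p'.2) := by
    rw [hd]; push_cast; field_simp
  rw [e, abs_div, abs_of_pos (mul_pos hq hq'), ← mul_div_assoc, div_lt_one (by positivity)] at h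
  have hb : (p.2 : ℝ) * p'.2 ≤ 2 ^ (4 * s) := by
    have h1 : (p.2 : ℝ) ≤ 2 ^ (s + 1) := by exact_mod_cast hp.1.2.le
    have h2 : (p'.2 : ℝ) ≤ 2 ^ (s + 1) := by exact_mod_cast hp'.1.2.le
    calc (p.2 : ℝ) * p'.2 ≤ 2 ^ (s + 1) * 2 ^ (s + 1) := by gcongr
      _ = 2 ^ (2 * s + 2) := by rw [← pow_add]; ring_nf
      _ ≤ 2 ^ (4 * s) := pow_le_pow_right₀ (by norm_num) (by omega)
  have hd1 : |(d : ℝ)| < 1 := by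
    have := h.trans_le hb
    have hpos : (0 : ℝ) < 2 ^ (4 * s) := by positivity
    nlinarith
  have hd0 : d = 0 := by
    have : |d| < 1 := by exact_mod_cast hd1
    exact Int.abs_lt_one_iff.1 this
  linarith

lemma eta_disjoint (η : ℝ → ℝ) (hη : IsEta η) (s : ℕ) (hs : 1 ≤ s) (S : Finset (ℕ × ℕ))
    (hS : S ⊆ Rset s) (ξ : ℝ) : ∑ p ∈ S, etaPer η s (ξ - (p.1 : ℝ) / p.2) ^ 2 ≤ 1 := by
  by_cases h : ∃ p ∈ S, etaPer η s (ξ - (p.1 : ℝ) / p.2) ≠ 0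
  · obtain ⟨p, hp, hne⟩ := h
    rw [Finset.sum_eq_single_of_mem p hp]
    · have := etaPer_bounds η hη s (ξ - (p.1 : ℝ) / p.2)
      nlinarith
    · intro p' hp' hpp'
      by_contra hc
      apply hpp'
      have hc' : etaPer η s (ξ - (p'.1 : ℝ) / p'.2) ≠ 0 := fun h0 => hc (by rw [h0]; simp)
      have b1 := etaPer_supp η hη s _ hne
      have b2 := etaPer_supp η hη s _ hc'
      set k1 := round (ξ - (p.1 : ℝ) / p.2)
      set k2 := round (ξ - (p'.1 : ℝ) / p'.2)
      apply frac_sep s hs p' p (hS hp') (hS hp) (k1 - k2)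
      have e : (p'.1 : ℝ) / p'.2 - (p.1 : ℝ) / p.2 - ((k1 - k2 : ℤ) : ℝ)
          = (ξ - (p.1 : ℝ) / p.2 - k1) - (ξ - (p'.1 : ℝ) / p'.2 - k2) := by push_cast; ring
      rw [e]
      have := abs_sub (ξ - (p.1 : ℝ) / p.2 - k1) (ξ - (p'.1 : ℝ) / p'.2 - k2)
      have hpos : (0 : ℝ) < 2 ^ (4 * s) := by positivity
      nlinarith
  · push Not at h
    rw [Finset.sum_eq_zero]
    · norm_num
    · intro p hp; rw [h p hp]; simp

lemma fhat_eq (f : ℤ → ℂ) (hf : (Function.support f).Finite) :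
    fhat f = fun ξ => ∑ z ∈ hf.toFinset, f z * ee (-(z * ξ)) := by
  funext ξ
  unfold fhat
  rw [tsum_eq_sum (s := hf.toFinset)]
  · refine Finset.sum_congr rfl fun z _ => ?_
    unfold ee
    push_cast
    ring_nf
  · intro z hz
    have : f z = 0 := by simpa using hz
    simp [this]

/-- the piece of `f` with frequency near `p.1/p.2` -/
noncomputable def hpc (η : ℝ → ℝ) (s : ℕ) (f : ℤ → ℂ) (p : ℕ × ℕ) (z : ℤ) : ℂ :=
  FinvInt (fun ξ => (etaPer η s (ξ - (p.1 : ℝ) / p.2) : ℂ) * fhat f ξ) z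

lemma fhat_bdd (f : ℤ → ℂ) (hf : (Function.support f).Finite) : ∃ B : ℝ, 0 ≤ B ∧ ∀ ξ, ‖fhat f ξ‖ ≤ B := by
  refine ⟨∑ z ∈ hf.toFinset, ‖f z‖, Finset.sum_nonneg fun _ _ => norm_nonneg _, fun ξ => ?_⟩
  rw [fhat_eq f hf]
  refine (norm_sum_le _ _).trans (Finset.sum_le_sum fun z _ => ?_)
  rw [norm_mul, norm_ee, mul_one]

lemma fhat_cont (f : ℤ → ℂ) (hf : (Function.support f).Finite) : Continuous (fhat f) := by
  rw [fhat_eq f hf]; exact continuous_trig _ _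

lemma piece_meas (η : ℝ → ℝ) (hη : IsEta η) (s : ℕ) (f : ℤ → ℂ) (hf : (Function.support f).Finite)
    (c : ℝ) : Measurable fun ξ => (etaPer η s (ξ - c) : ℂ) * fhat f ξ :=
  (Complex.measurable_ofReal.comp
    ((etaPer_measurable η hη s).comp (measurable_id.sub_const c))).mul (fhat_cont f hf).measurable

lemma piece_norm (η : ℝ → ℝ) (hη : IsEta η) (s : ℕ) (f : ℤ → ℂ) (c ξ : ℝ) :
    ‖(etaPer η s (ξ - c) : ℂ) * fhat f ξ‖ ≤ ‖fhat f ξ‖ := by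
  rw [norm_mul, Complex.norm_real, Real.norm_of_nonneg (etaPer_bounds η hη s _).1]
  exact mul_le_of_le_one_left (norm_nonneg _) (etaPer_bounds η hη s _).2

lemma hpc_sum (η : ℝ → ℝ) (hη : IsEta η) (s : ℕ) (hs : 1 ≤ s) (S : Finset (ℕ × ℕ))
    (hS : S ⊆ Rset s) (f : ℤ → ℂ) (hf : (Function.support f).Finite) (T : Finset ℤ) :
    ∑ p ∈ S, ∑ z ∈ T, ‖hpc η s f p z‖ ^ 2 ≤ ∑' x : ℤ, ‖f x‖ ^ 2 := by
  obtain ⟨B, hB0, hB⟩ := fhat_bdd f hf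
  have hpm := fun c => piece_meas η hη s f hf c
  have h1 : ∀ p ∈ S, ∑ z ∈ T, ‖hpc η s f p z‖ ^ 2 ≤
      ∫ ξ in (0 : ℝ)..1, ‖(etaPer η s (ξ - (p.1 : ℝ) / p.2) : ℂ) * fhat f ξ‖ ^ 2 := fun p _ =>
    bessel _ (hpm _) B (fun ξ => (piece_norm η hη s f _ ξ).trans (hB ξ)) T
  have hi : ∀ p ∈ S, IntervalIntegrable
      (fun ξ => ‖(etaPer η s (ξ - (p.1 : ℝ) / p.2) : ℂ) * fhat f ξ‖ ^ 2) MeasureTheory.volume 0 1 :=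
    fun p _ => bdd_int ((hpm _).norm.pow_const 2) (B ^ 2) fun ξ => by
      rw [Real.norm_of_nonneg (by positivity)]
      exact pow_le_pow_left₀ (norm_nonneg _) ((piece_norm η hη s f _ ξ).trans (hB ξ)) 2
  have hf2 : IntervalIntegrable (fun ξ => ‖fhat f ξ‖ ^ 2) MeasureTheory.volume 0 1 :=
    ((fhat_cont f hf).norm.pow 2).intervalIntegrable _ _
  refine (Finset.sum_le_sum h1).trans ?_
  rw [← intervalIntegral.integral_finsetSum hi]
  have h2 : ∫ ξ in (0 : ℝ)..1,
      ∑ p ∈ S, ‖(etaPer η s (ξ - (p.1 : ℝ) / p.2) : ℂ) * fhat f ξ‖ ^ 2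
      ≤ ∫ ξ in (0 : ℝ)..1, ‖fhat f ξ‖ ^ 2 := by
    apply intervalIntegral.integral_mono_on zero_le_one (ii_sum _ hi) hf2
    intro ξ _
    have := eta_disjoint η hη s hs S hS ξ
    simp only [norm_mul, mul_pow, ← Finset.sum_mul, Complex.norm_real, Real.norm_eq_abs, sq_abs]
    exact mul_le_of_le_one_left (by positivity) this
  refine h2.trans (le_of_eq ?_)
  rw [fhat_eq f hf, parseval_fin, tsum_eq_sum]
  intro z hz
  have : f z = 0 := by simpa using hz
  simp [this]

lemma finv_expand (η : ℝ → ℝ) (hη : IsEta η) (s : ℕ) (f : ℤ → ℂ) (hf : (Function.support f).Finite)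
    (p : ℕ × ℕ) (β : ℝ) (N : ℕ) (x : ℤ) :
    FinvInt (fun ξ => Mhat β N (ξ - (p.1 : ℝ) / p.2) *
      (etaPer η s (ξ - (p.1 : ℝ) / p.2) : ℂ) * fhat f ξ) x
      = (N : ℂ)⁻¹ * ∑ m ∈ Finset.Icc 1 N, (((((m : ℝ) ^ β - ((m : ℝ) - 1) ^ β) / β) : ℝ) : ℂ) *
        (ee (-((p.1 : ℝ) / p.2 * m)) * hpc η s f p (x + m)) := by
  obtain ⟨B, hB0, hB⟩ := fhat_bdd f hf
  set c : ℝ := (p.1 : ℝ) / p.2 with hc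
  have hi : ∀ z : ℤ, IntervalIntegrable
      (fun ξ => ((etaPer η s (ξ - c) : ℂ) * fhat f ξ) * ee (z * ξ)) MeasureTheory.volume 0 1 :=
    fun z => bdd_int ((piece_meas η hη s f hf c).mul
      (continuous_ee.comp (by fun_prop : Continuous fun ξ : ℝ => (z : ℝ) * ξ)).measurable) B fun ξ => by
        rw [norm_mul, norm_ee, mul_one]; exact (piece_norm η hη s f _ ξ).trans (hB ξ)
  rw [FinvInt_eq]
  have e : ∀ ξ : ℝ, Mhat β N (ξ - c) * (etaPer η s (ξ - c) : ℂ) * fhat f ξ * ee (x * ξ)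
      = ∑ m ∈ Finset.Icc 1 N, ((N : ℂ)⁻¹ * ((((((m : ℝ) ^ β - ((m : ℝ) - 1) ^ β) / β) : ℝ) : ℂ) *
        ee (-(c * m)))) * (((etaPer η s (ξ - c) : ℂ) * fhat f ξ) * ee (((x + m : ℤ) : ℝ) * ξ)) := by
    intro ξ
    unfold Mhat
    rw [Finset.mul_sum, Finset.sum_mul, Finset.sum_mul, Finset.sum_mul]
    refine Finset.sum_congr rfl fun m _ => ?_
    have h1 : Complex.exp (2 * Real.pi * Complex.I * ((ξ - c : ℝ) : ℂ) * m) = ee ((ξ - c) * m) := by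
      unfold ee; push_cast; ring_nf
    have h2 : ee (((x + m : ℤ) : ℝ) * ξ) = ee (x * ξ) * ee (m * ξ) := by
      rw [← ee_add]; congr 1; push_cast; ring
    have h3 : ee ((ξ - c) * m) = ee (-(c * m)) * ee (m * ξ) := by
      rw [← ee_add]; congr 1; ring
    rw [h1, h2, h3]
    ring
  simp only [e]
  rw [intervalIntegral.integral_finsetSum (fun m _ => (hi _).const_mul _), Finset.mul_sum]
  refine Finset.sum_congr rfl fun m _ => ?_
  rw [intervalIntegral.integral_const_mul, hpc, FinvInt_eq]
  ring

lemma sum_Icc_one (N : ℕ) (u : ℕ → ℝ) :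
    ∑ m ∈ Finset.Icc 1 N, u m = ∑ m ∈ Finset.range N, u (m + 1) := by
  induction N with
  | zero => simp
  | succ N ih => rw [Finset.sum_Icc_succ_top (by omega), ih, Finset.sum_range_succ]

lemma sum_blocks (K Q : ℕ) (u : ℕ → ℝ) :
    ∑ m ∈ Finset.range (K * Q), u m = ∑ j ∈ Finset.range K, ∑ l ∈ Finset.range Q, u (j * Q + l) := by
  induction K with
  | zero => simp
  | succ K ih => rw [Finset.sum_range_succ, ← ih, Nat.succ_mul, Finset.sum_range_add]

lemma fiber_max (Q : ℕ) (hQ : 0 < Q) (v : ℤ → ℝ) (hv : ∀ z, 0 ≤ v z) (r : ℤ) (N : ℤ → ℕ)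
    (hN : ∀ x, Q ≤ N x) (F : Finset ℤ) :
    ∃ T : Finset ℤ, ∑ y ∈ F, ((∑ m ∈ Finset.Icc 1 (N (r + Q * y)), v (r + Q * y + m)) /
      (N (r + Q * y) : ℝ)) ^ 2 ≤ 16 / Q * ∑ z ∈ T, v z ^ 2 := by
  have hQ' : (0 : ℝ) < Q := by exact_mod_cast hQ
  set G : ℤ → ℝ := fun t => (∑ l ∈ Finset.range Q, v (r + Q * t + l + 1)) / Q with hG
  have hG0 : ∀ t, 0 ≤ G t := fun t => div_nonneg (Finset.sum_nonneg fun _ _ => hv _) hQ'.le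
  set J : ℤ → ℕ := fun y => N (r + Q * y) / Q with hJ
  obtain ⟨T, hT⟩ := HL_int G hG0 F J
  refine ⟨(T ×ˢ Finset.range Q).image (fun tl : ℤ × ℕ => r + Q * tl.1 + tl.2 + 1), ?_⟩
  have h1 : ∀ y ∈ F, ((∑ m ∈ Finset.Icc 1 (N (r + Q * y)), v (r + Q * y + m)) /
      (N (r + Q * y) : ℝ)) ^ 2 ≤
      4 * ((∑ j ∈ Finset.range (J y + 1), G (y + j)) / (J y + 1 : ℝ)) ^ 2 := by
    intro y _
    set n := N (r + Q * y) with hn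
    have hQn : Q ≤ n := hN _
    have hn0 : (0 : ℝ) < n := by exact_mod_cast lt_of_lt_of_le hQ hQn
    have hdm := Nat.div_add_mod n Q
    have hml := Nat.mod_lt n hQ
    have e1 : n ≤ (J y + 1) * Q := by
      simp only [hJ]; rw [← hn]; nlinarith
    have e2 : (J y + 1) * Q ≤ 2 * n := by
      simp only [hJ]; rw [← hn, Nat.succ_mul, mul_comm]; omega
    have e2' : ((J y : ℝ) + 1) * Q ≤ 2 * n := by exact_mod_cast e2
    have b1 : ∑ m ∈ Finset.Icc 1 n, v (r + Q * y + m) ≤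
        Q * ∑ j ∈ Finset.range (J y + 1), G (y + j) := by
      rw [sum_Icc_one n (fun m => v (r + Q * y + m))]
      refine (Finset.sum_le_sum_of_subset_of_nonneg
        (Finset.range_subset_range.2 e1) (fun _ _ _ => hv _)).trans (le_of_eq ?_)
      rw [sum_blocks (J y + 1) Q (fun m => v (r + Q * y + ((m + 1 : ℕ) : ℤ))), Finset.mul_sum]
      refine Finset.sum_congr rfl fun j _ => ?_
      simp only [hG]
      rw [mul_div_cancel₀ _ hQ'.ne']
      refine Finset.sum_congr rfl fun l _ => ?_
      congr 1
      push_cast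
      ring
    have hs0 : 0 ≤ ∑ j ∈ Finset.range (J y + 1), G (y + j) := Finset.sum_nonneg fun _ _ => hG0 _
    have b2 : (∑ m ∈ Finset.Icc 1 n, v (r + Q * y + m)) / (n : ℝ) ≤
        2 * ((∑ j ∈ Finset.range (J y + 1), G (y + j)) / (J y + 1 : ℝ)) := by
      rw [← mul_div_assoc, div_le_div_iff₀ hn0 (by positivity)]
      calc _ ≤ (Q * ∑ j ∈ Finset.range (J y + 1), G (y + j)) * ((J y : ℝ) + 1) := by gcongr
        _ = (∑ j ∈ Finset.range (J y + 1), G (y + j)) * (((J y : ℝ) + 1) * Q) := by ring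
        _ ≤ (∑ j ∈ Finset.range (J y + 1), G (y + j)) * (2 * n) := by gcongr
        _ = _ := by ring
    calc _ ≤ (2 * ((∑ j ∈ Finset.range (J y + 1), G (y + j)) / (J y + 1 : ℝ))) ^ 2 :=
          pow_le_pow_left₀ (div_nonneg (Finset.sum_nonneg fun _ _ => hv _) hn0.le) b2 2
      _ = _ := by ring
  have hinj : Set.InjOn (fun tl : ℤ × ℕ => r + Q * tl.1 + tl.2 + 1) (T ×ˢ Finset.range Q : Finset (ℤ × ℕ)) := by
    rintro ⟨t, l⟩ h ⟨t', l'⟩ h' heq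
    simp only [Finset.coe_product, Set.mem_prod, Finset.mem_coe, Finset.mem_range] at h h'
    simp only at heq
    have hz : (Q : ℤ) * t + l = Q * t' + l' := by linarith
    have c1 : ((Q : ℤ) * t + l) / Q = t := by
      rw [add_comm, Int.add_mul_ediv_left _ _ (by omega), Int.ediv_eq_zero_of_lt (by omega) (by omega)]
      simp
    have c2 : ((Q : ℤ) * t' + l') / Q = t' := by
      rw [add_comm, Int.add_mul_ediv_left _ _ (by omega), Int.ediv_eq_zero_of_lt (by omega) (by omega)]
      simp
    have ht : t = t' := by rw [← c1, ← c2, hz]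
    subst ht
    have : l = l' := by omega
    rw [this]
  rw [Finset.sum_image hinj, Finset.sum_product]
  have h2 : ∀ t ∈ T, G t ^ 2 ≤ 1 / Q * ∑ l ∈ Finset.range Q, v (r + Q * t + l + 1) ^ 2 := by
    intro t _
    have := sq_sum_le_card_mul_sum_sq (s := Finset.range Q) (f := fun l : ℕ => v (r + Q * t + l + 1))
    simp only [Finset.card_range] at this
    simp only [hG]
    rw [div_pow, div_le_iff₀ (by positivity)]
    calc _ ≤ _ := this
      _ = _ := by field_simp
  calc _ ≤ _ := Finset.sum_le_sum h1
    _ = 4 * ∑ y ∈ F, ((∑ j ∈ Finset.range (J y + 1), G (y + j)) / (J y + 1 : ℝ)) ^ 2 := by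
        rw [Finset.mul_sum]
    _ ≤ 4 * (4 * ∑ t ∈ T, G t ^ 2) := by gcongr
    _ ≤ 4 * (4 * ∑ t ∈ T, (1 / Q * ∑ l ∈ Finset.range Q, v (r + Q * t + l + 1) ^ 2)) := by
        gcongr with t ht; exact h2 t ht
    _ = _ := by rw [← Finset.mul_sum]; ring

lemma abstract_max (Q : ℕ) (hQ : 0 < Q) (g : ℤ → ℤ → ℂ) (hg : ∀ x k y, g (x + Q * k) y = g x y)
    (D : ℝ) (hD : ∀ T : Finset ℤ, ∑ r ∈ Finset.range Q, ∑ z ∈ T, ‖g r z‖ ^ 2 ≤ Q * D)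
    (N : ℤ → ℕ) (hN : ∀ x, Q ≤ N x) (F : Finset ℤ) :
    ∑ x ∈ F, ((∑ m ∈ Finset.Icc (1 : ℕ) (N x), ‖g x (x + m)‖) / (N x : ℝ)) ^ 2 ≤ 16 * D := by
  have hQ' : (0 : ℝ) < Q := by exact_mod_cast hQ
  choose T hT using fun r : ℕ => fiber_max Q hQ (fun z => ‖g r z‖) (fun _ => norm_nonneg _) r N hN
    ((F.filter fun x : ℤ => (x % (Q : ℤ)).toNat = r).image fun x => x / Q)
  have hmod : ∀ x : ℤ, 0 ≤ x % Q ∧ x % Q < Q := fun x =>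
    ⟨Int.emod_nonneg _ (by omega), Int.emod_lt_of_pos _ (by omega)⟩
  rw [← Finset.sum_fiberwise_of_maps_to (s := F) (t := Finset.range Q) (g := fun x : ℤ => (x % (Q : ℤ)).toNat)
    (fun x _ => by have := hmod x; simp only [Finset.mem_range]; omega)]
  have key : ∀ r ∈ Finset.range Q, ∑ x ∈ F.filter (fun x : ℤ => (x % (Q : ℤ)).toNat = r),
      ((∑ m ∈ Finset.Icc (1 : ℕ) (N x), ‖g x (x + m)‖) / (N x : ℝ)) ^ 2 ≤
      16 / Q * ∑ z ∈ (Finset.range Q).biUnion T, ‖g r z‖ ^ 2 := by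
    intro r hr
    have hx : ∀ x ∈ F.filter (fun x : ℤ => (x % (Q : ℤ)).toNat = r), x = r + Q * (x / Q) := by
      intro x hx
      have h1 := (Finset.mem_filter.1 hx).2
      have h2 := Int.emod_add_mul_ediv x Q
      have := hmod x
      have : x % Q = r := by omega
      rw [this] at h2
      exact h2.symm
    have h1 := hT r
    rw [Finset.sum_image (by
      intro x hx1 y hy1 hxy
      simp only at hxy
      rw [hx x hx1, hx y hy1, hxy])] at h1
    refine le_trans (le_of_eq ?_) (h1.trans ?_)
    · refine Finset.sum_congr rfl fun x hx1 => ?_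
      have e := hx x hx1
      rw [← e]
      have : ∀ y, g x y = g r y := fun y => by
        conv_lhs => rw [e]
        exact hg _ _ _
      simp only [this]
    · apply mul_le_mul_of_nonneg_left _ (by positivity)
      apply Finset.sum_le_sum_of_subset_of_nonneg
      · exact Finset.subset_biUnion_of_mem T hr
      · intros; positivity
  refine (Finset.sum_le_sum key).trans ?_
  rw [← Finset.mul_sum]
  calc _ ≤ 16 / (Q : ℝ) * (Q * D) := by gcongr; exact hD _
    _ = _ := by field_simp

lemma sup_bound (n0 : ℕ) (E : ℕ → ℤ → ℝ) (hE : ∀ n x, 0 ≤ E n x) (B : ℝ)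
    (h : ∀ n : ℤ → ℕ, (∀ x, n0 ≤ n x) → ∀ F : Finset ℤ, ∑ x ∈ F, E (n x) x ^ 2 ≤ B) :
    ∑' x : ℤ, (⨆ (n : ℕ) (_ : n0 ≤ n), E n x) ^ 2 ≤ B := by
  have hB0 : 0 ≤ B := by simpa using h (fun _ => n0) (fun _ => le_rfl) ∅
  set V : ℤ → Set ℝ := fun x => (fun n => E n x) '' {n | n0 ≤ n} with hV
  have hne : ∀ x, (V x).Nonempty := fun x => ⟨_, n0, le_refl n0, rfl⟩
  have hbd : ∀ x, BddAbove (V x) := by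
    intro x
    refine ⟨B + 1, ?_⟩
    rintro _ ⟨n, hn, rfl⟩
    have := h (fun _ => n) (fun _ => hn) {x}
    simp only [Finset.sum_singleton] at this
    simp only
    nlinarith [hE n x]
  have hsup0 : ∀ x, 0 ≤ ⨆ (n : ℕ) (_ : n0 ≤ n), E n x := fun x =>
    Real.iSup_nonneg fun n => Real.iSup_nonneg fun _ => hE n x
  have hle : ∀ x, (⨆ (n : ℕ) (_ : n0 ≤ n), E n x) ≤ sSup (V x) := by
    intro x
    apply ciSup_le
    intro n
    by_cases hn : n0 ≤ n
    · simp only [hn, ciSup_unique]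
      exact le_csSup (hbd x) ⟨n, hn, rfl⟩
    · have : IsEmpty (n0 ≤ n) := ⟨hn⟩
      rw [Real.iSup_of_isEmpty]
      exact (hE n0 x).trans (le_csSup (hbd x) ⟨n0, le_refl n0, rfl⟩)
  choose u _ hut huV using fun x => exists_seq_tendsto_sSup (hne x) (hbd x)
  choose nn hnn hnE using huV
  refine Real.tsum_le_of_sum_le (fun x => sq_nonneg _) fun F => ?_
  have h1 : ∑ x ∈ F, (⨆ (n : ℕ) (_ : n0 ≤ n), E n x) ^ 2 ≤ ∑ x ∈ F, sSup (V x) ^ 2 :=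
    Finset.sum_le_sum fun x _ => pow_le_pow_left₀ (hsup0 x) (hle x) 2
  refine h1.trans ?_
  have ht : Filter.Tendsto (fun k => ∑ x ∈ F, u x k ^ 2) Filter.atTop
      (nhds (∑ x ∈ F, sSup (V x) ^ 2)) := tendsto_finsetSum _ fun x _ => (hut x).pow 2
  refine le_of_tendsto ht (Filter.Eventually.of_forall fun k => ?_)
  have := h (fun x => nn x k) (fun x => hnn x k) F
  simp only [hnE] at this
  exact this

/-- common multiple of the denominators -/
def Qs (s : ℕ) : ℕ := 4 * primorial (2 ^ (s + 1))

lemma Qs_pos (s : ℕ) : 0 < Qs s := Nat.mul_pos (by norm_num) (primorial_pos _)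

lemma Qs_le (s : ℕ) : Qs s ≤ 2 ^ 2 ^ (s + 4) := by
  have h := primorial_le_four_pow (2 ^ (s + 1))
  have h4 : (4 : ℕ) ^ (2 ^ (s + 1)) = 2 ^ (2 ^ (s + 2)) := by
    rw [show (4 : ℕ) = 2 ^ 2 by norm_num, ← pow_mul]; ring_nf
  have h2 : Qs s ≤ 2 ^ (2 + 2 ^ (s + 2)) := by
    rw [pow_add, ← h4]; unfold Qs; omega
  refine h2.trans (Nat.pow_le_pow_right (by norm_num) ?_)
  have e1 : 2 ^ (s + 2) = 4 * 2 ^ s := by ring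
  have e2 : 2 ^ (s + 4) = 16 * 2 ^ s := by ring
  have : 1 ≤ 2 ^ s := Nat.one_le_two_pow
  omega

lemma sqfree_dvd_primorial (m n : ℕ) (hm : Squarefree m) (hmn : m ≤ n) : m ∣ primorial n := by
  rw [← Nat.prod_primeFactors_of_squarefree hm]
  apply Finset.prod_dvd_prod_of_subset
  intro p hp
  simp only [Finset.mem_filter, Finset.mem_range]
  have := Nat.le_of_mem_primeFactors hp
  exact ⟨by omega, Nat.prime_of_mem_primeFactors hp⟩

lemma dvd_Qs (s : ℕ) (p : ℕ × ℕ) (hp : p ∈ Rset s) : p.2 ∣ Qs s := by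
  simp only [Rset, Finset.mem_filter, Finset.mem_product, Finset.mem_range] at hp
  obtain ⟨⟨-, hlt⟩, -, -, -, -, h⟩ := hp
  rcases h with h | ⟨h4, h⟩
  · exact dvd_mul_of_dvd_right (sqfree_dvd_primorial _ _ h hlt.le) 4
  · obtain ⟨m, hm⟩ := h4
    have e : p.2 / 4 = m := by omega
    rw [e] at h
    rw [hm]
    exact Nat.mul_dvd_mul_left 4 (sqfree_dvd_primorial m _ h (by omega))

lemma ee_eq_one (t : ℝ) (h : ee t = 1) : ∃ k : ℤ, t = k := by
  unfold ee at h
  rw [Complex.exp_eq_one_iff] at h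
  obtain ⟨k, hk⟩ := h
  refine ⟨k, ?_⟩
  have h2 : (2 * Real.pi * Complex.I : ℂ) ≠ 0 := Complex.two_pi_I_ne_zero
  have : (t : ℂ) = k := by
    apply mul_left_cancel₀ h2
    rw [hk]; ring
  exact_mod_cast this

lemma ee_nat_mul (t : ℝ) (r : ℕ) : ee (t * r) = ee t ^ r := by
  unfold ee
  rw [← Complex.exp_nat_mul]
  push_cast
  ring_nf

lemma frac_mul_Qs (s : ℕ) (p : ℕ × ℕ) (hp : p ∈ Rset s) : ∃ k : ℤ, (p.1 : ℝ) / p.2 * Qs s = k := by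
  obtain ⟨m, hm⟩ := dvd_Qs s p hp
  have hq0 : 0 < p.2 := Nat.pos_of_ne_zero fun h => by
    rw [h, zero_mul] at hm; exact (Qs_pos s).ne' hm
  have hq : (0 : ℝ) < p.2 := by exact_mod_cast hq0
  refine ⟨p.1 * m, ?_⟩
  rw [hm]
  push_cast
  field_simp

lemma sum_ee (s : ℕ) (p p' : ℕ × ℕ) (hp : p ∈ Rset s) (hp' : p' ∈ Rset s) :
    ∑ r ∈ Finset.range (Qs s), ee (((p.1 : ℝ) / p.2 - (p'.1 : ℝ) / p'.2) * r)
      = if p = p' then (Qs s : ℂ) else 0 := by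
  split_ifs with h
  · subst h
    simp [ee]
  · simp only [ee_nat_mul]
    set t := (p.1 : ℝ) / p.2 - (p'.1 : ℝ) / p'.2 with ht
    have h1 : ee t ≠ 1 := by
      intro h1
      obtain ⟨k, hk⟩ := ee_eq_one t h1
      apply h
      apply frac_ne_int s p p' hp hp' k
      simp only [Rset, Finset.mem_filter, Finset.mem_product, Finset.mem_range] at hp hp'
      have hq0 : 0 < p.2 := by omega
      have hq0' : 0 < p'.2 := by omega
      have hq : (0 : ℝ) < p.2 := by exact_mod_cast hq0
      have hq' : (0 : ℝ) < p'.2 := by exact_mod_cast hq0'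
      rw [ht] at hk
      field_simp at hk
      have : (p.1 : ℝ) * p'.2 - p'.1 * p.2 = k * (p.2 * p'.2) := by linarith
      exact_mod_cast this
    have h2 : ee t ^ Qs s = 1 := by
      rw [← ee_nat_mul]
      obtain ⟨k, hk⟩ := frac_mul_Qs s p hp
      obtain ⟨k', hk'⟩ := frac_mul_Qs s p' hp'
      have : t * Qs s = ((k - k' : ℤ) : ℝ) := by
        rw [ht, sub_mul, hk, hk']; push_cast; rfl
      rw [this, ee_int]
    have h3 := geom_sum_mul (ee t) (Qs s)
    rw [h2, sub_self] at h3
    exact (mul_eq_zero.1 h3).resolve_right (sub_ne_zero.2 h1)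

lemma ortho (s : ℕ) (S : Finset (ℕ × ℕ)) (hS : S ⊆ Rset s) (b : ℕ × ℕ → ℂ) :
    ∑ r ∈ Finset.range (Qs s), ‖∑ p ∈ S, b p * ee ((p.1 : ℝ) / p.2 * r)‖ ^ 2
      = Qs s * ∑ p ∈ S, ‖b p‖ ^ 2 := by
  have h : ((∑ r ∈ Finset.range (Qs s), ‖∑ p ∈ S, b p * ee ((p.1 : ℝ) / p.2 * r)‖ ^ 2 : ℝ) : ℂ)
      = ((Qs s * ∑ p ∈ S, ‖b p‖ ^ 2 : ℝ) : ℂ) := by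
    have e : ∀ r : ℕ, ((‖∑ p ∈ S, b p * ee ((p.1 : ℝ) / p.2 * r)‖ ^ 2 : ℝ) : ℂ)
        = ∑ p ∈ S, ∑ p' ∈ S, b p * (starRingEnd ℂ) (b p') *
          ee (((p.1 : ℝ) / p.2 - (p'.1 : ℝ) / p'.2) * r) := by
      intro r
      rw [← Complex.normSq_eq_norm_sq, ← Complex.mul_conj, map_sum, Finset.sum_mul_sum]
      refine Finset.sum_congr rfl fun z _ => Finset.sum_congr rfl fun w _ => ?_
      rw [map_mul, conj_ee, sub_mul, sub_eq_add_neg, ee_add]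
      ring
    rw [Complex.ofReal_sum]
    simp only [e]
    rw [Finset.sum_comm, Complex.ofReal_mul, Complex.ofReal_sum, Finset.mul_sum]
    refine Finset.sum_congr rfl fun p hp => ?_
    rw [Finset.sum_comm]
    simp only [← Finset.mul_sum]
    rw [Finset.sum_congr rfl fun p' hp' => by rw [sum_ee s p p' (hS hp) (hS hp')]]
    simp [hp, Complex.mul_conj, Complex.normSq_eq_norm_sq]
    ring
  exact_mod_cast h

lemma weight_bound (β : ℝ) (h1 : 1 / 2 ≤ β) (h2 : β ≤ 1) (m : ℕ) (hm : 1 ≤ m) :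
    |((m : ℝ) ^ β - ((m : ℝ) - 1) ^ β) / β| ≤ 2 := by
  obtain ⟨k, rfl⟩ : ∃ k, m = k + 1 := ⟨m - 1, by omega⟩
  push_cast
  rw [add_sub_cancel_right]
  have hb : 0 < β := by linarith
  have a1 : (k : ℝ) ^ β ≤ ((k : ℝ) + 1) ^ β := Real.rpow_le_rpow (by positivity) (by linarith) hb.le
  have a2 : ((k : ℝ) + 1) ^ β ≤ (k : ℝ) ^ β + 1 := by
    have := NNReal.rpow_add_le_add_rpow (k : NNReal) 1 hb.le h2
    rw [NNReal.one_rpow] at this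
    exact_mod_cast this
  rw [abs_of_nonneg (div_nonneg (by linarith) hb.le), div_le_iff₀ hb]
  linarith

lemma linearized (η : ℝ → ℝ) (hη : IsEta η) (s : ℕ) (hs : 1 ≤ s) (β : ℝ) (hβ1 : 1 / 2 ≤ β)
    (hβ2 : β ≤ 1) (χ : (q : ℕ) → DirichletCharacter ℂ q) (S : Finset (ℕ × ℕ)) (hS : S ⊆ Rset s)
    (f : ℤ → ℂ) (hf : (Function.support f).Finite) (n : ℤ → ℕ) (hn : ∀ x, 2 ^ (s + 4) ≤ n x)
    (F : Finset ℤ) :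
    ∑ x ∈ F, ‖∑ p ∈ S, gaussG p.2 (χ p.2) (p.1 : ℤ) *
      FinvInt (fun ξ => Mhat β (2 ^ n x) (ξ - (p.1 : ℝ) / p.2) *
        (etaPer η s (ξ - (p.1 : ℝ) / p.2) : ℂ) * fhat f ξ) x‖ ^ 2
      ≤ 64 * ((((s : ℝ) + 1) ^ 2 / 2 ^ s) * ∑' x : ℤ, ‖f x‖ ^ 2) := by
  set γ : ℝ := ((s : ℝ) + 1) ^ 2 / 2 ^ s with hγ
  have hγ0 : 0 ≤ γ := by positivity
  set Λ : ℕ × ℕ → ℂ := fun p => gaussG p.2 (χ p.2) (p.1 : ℤ) with hΛ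
  have hΛb : ∀ p ∈ S, ‖Λ p‖ ^ 2 ≤ γ := by
    intro p hp
    have := hS hp
    simp only [Rset, Finset.mem_filter, Finset.mem_product, Finset.mem_range] at this
    exact gaussG_bound s p.2 p.1 this.2.1 this.1.2 this.2.2.2.2.1 (χ p.2)
  set g : ℤ → ℤ → ℂ := fun x y => ∑ p ∈ S, (Λ p * (ee (-((p.1 : ℝ) / p.2 * y)) * hpc η s f p y)) *
    ee ((p.1 : ℝ) / p.2 * x) with hg
  have hper : ∀ x k y, g (x + Qs s * k) y = g x y := by
    intro x k y
    simp only [hg]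
    refine Finset.sum_congr rfl fun p hp => ?_
    congr 1
    obtain ⟨j, hj⟩ := frac_mul_Qs s p (hS hp)
    have : (p.1 : ℝ) / p.2 * ((x + Qs s * k : ℤ) : ℝ) = (p.1 : ℝ) / p.2 * x + ((j * k : ℤ) : ℝ) := by
      push_cast
      rw [← hj]; ring
    rw [this, ee_add, ee_int, mul_one]
  have hD : ∀ T : Finset ℤ, ∑ r ∈ Finset.range (Qs s), ∑ z ∈ T, ‖g r z‖ ^ 2
      ≤ Qs s * (γ * ∑' x : ℤ, ‖f x‖ ^ 2) := by
    intro T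
    rw [Finset.sum_comm]
    have e : ∀ z ∈ T, ∑ r ∈ Finset.range (Qs s), ‖g r z‖ ^ 2
        ≤ Qs s * (γ * ∑ p ∈ S, ‖hpc η s f p z‖ ^ 2) := by
      intro z _
      have := ortho s S hS (fun p => Λ p * (ee (-((p.1 : ℝ) / p.2 * z)) * hpc η s f p z))
      simp only [hg, Int.cast_natCast]
      rw [this, Finset.mul_sum S _ γ]
      gcongr with p hp
      rw [norm_mul, norm_mul, norm_ee, one_mul, mul_pow]
      gcongr
      exact hΛb p hp
    refine (Finset.sum_le_sum e).trans ?_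
    rw [← Finset.mul_sum, ← Finset.mul_sum]
    gcongr
    rw [Finset.sum_comm]
    exact hpc_sum η hη s hs S hS f hf T
  have hmax := abstract_max (Qs s) (Qs_pos s) g hper _ hD (fun x => 2 ^ n x)
    (fun x => (Qs_le s).trans (Nat.pow_le_pow_right (by norm_num) (hn x))) F
  have hpt : ∀ x ∈ F, ‖∑ p ∈ S, gaussG p.2 (χ p.2) (p.1 : ℤ) *
      FinvInt (fun ξ => Mhat β (2 ^ n x) (ξ - (p.1 : ℝ) / p.2) *
        (etaPer η s (ξ - (p.1 : ℝ) / p.2) : ℂ) * fhat f ξ) x‖ ^ 2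
      ≤ 4 * ((∑ m ∈ Finset.Icc (1 : ℕ) (2 ^ n x), ‖g x (x + m)‖) / ((2 ^ n x : ℕ) : ℝ)) ^ 2 := by
    intro x _
    have e : ∑ p ∈ S, gaussG p.2 (χ p.2) (p.1 : ℤ) *
      FinvInt (fun ξ => Mhat β (2 ^ n x) (ξ - (p.1 : ℝ) / p.2) *
        (etaPer η s (ξ - (p.1 : ℝ) / p.2) : ℂ) * fhat f ξ) x
        = ((2 ^ n x : ℕ) : ℂ)⁻¹ * ∑ m ∈ Finset.Icc (1 : ℕ) (2 ^ n x),
          (((((m : ℝ) ^ β - ((m : ℝ) - 1) ^ β) / β) : ℝ) : ℂ) * g x (x + m) := by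
      simp only [finv_expand η hη s f hf]
      simp only [hg, Finset.mul_sum]
      rw [Finset.sum_comm]
      refine Finset.sum_congr rfl fun m _ => Finset.sum_congr rfl fun p _ => ?_
      have : ee (-((p.1 : ℝ) / p.2 * m)) = ee (-((p.1 : ℝ) / p.2 * ((x + m : ℤ) : ℝ))) *
          ee ((p.1 : ℝ) / p.2 * x) := by
        rw [← ee_add]; congr 1; push_cast; ring
      rw [this]
      simp only [hΛ]
      ring
    rw [e]
    have b : ‖((2 ^ n x : ℕ) : ℂ)⁻¹ * ∑ m ∈ Finset.Icc (1 : ℕ) (2 ^ n x),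
          (((((m : ℝ) ^ β - ((m : ℝ) - 1) ^ β) / β) : ℝ) : ℂ) * g x (x + m)‖
        ≤ 2 * ((∑ m ∈ Finset.Icc (1 : ℕ) (2 ^ n x), ‖g x (x + m)‖) / ((2 ^ n x : ℕ) : ℝ)) := by
      rw [norm_mul, norm_inv, Complex.norm_natCast, ← mul_div_assoc, inv_mul_eq_div]
      gcongr
      rw [Finset.mul_sum]
      refine (norm_sum_le _ _).trans (Finset.sum_le_sum fun m hm => ?_)
      rw [norm_mul, Complex.norm_real, Real.norm_eq_abs]
      gcongr
      exact weight_bound β hβ1 hβ2 m (Finset.mem_Icc.1 hm).1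
    calc _ ≤ (2 * ((∑ m ∈ Finset.Icc (1 : ℕ) (2 ^ n x), ‖g x (x + m)‖) / ((2 ^ n x : ℕ) : ℝ))) ^ 2 :=
          pow_le_pow_left₀ (norm_nonneg _) b 2
      _ = _ := by ring
  refine (Finset.sum_le_sum hpt).trans ?_
  rw [← Finset.mul_sum]
  linarith

lemma const_bound (ε : ℝ) (hε : 0 < ε) (s : ℕ) :
    ((s : ℝ) + 1) ^ 2 / 2 ^ s ≤
      ((1 + 1 / (ε * Real.log 2)) * (2 : ℝ) ^ (-(s : ℝ) * (1 / 2 - ε))) ^ 2 := by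
  have hl : 0 < Real.log 2 := Real.log_pos (by norm_num)
  have hel : 0 < ε * Real.log 2 := mul_pos hε hl
  have h1 : (s : ℝ) + 1 ≤ (1 + 1 / (ε * Real.log 2)) * (2 : ℝ) ^ ((s : ℝ) * ε) := by
    have h2 : (s : ℝ) * (ε * Real.log 2) + 1 ≤ (2 : ℝ) ^ ((s : ℝ) * ε) := by
      rw [Real.rpow_def_of_pos (by norm_num)]
      have := Real.add_one_le_exp (Real.log 2 * ((s : ℝ) * ε))
      linarith
    have hs : (0 : ℝ) ≤ s := by positivity
    calc (s : ℝ) + 1 ≤ (1 + 1 / (ε * Real.log 2)) * ((s : ℝ) * (ε * Real.log 2) + 1) := by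
          have : (1 + 1 / (ε * Real.log 2)) * ((s : ℝ) * (ε * Real.log 2) + 1)
            = s + 1 + (s * (ε * Real.log 2) + 1 / (ε * Real.log 2)) := by field_simp; ring
          rw [this]
          have : 0 ≤ s * (ε * Real.log 2) + 1 / (ε * Real.log 2) := by positivity
          linarith
      _ ≤ _ := by gcongr
  have e : (2 : ℝ) ^ (-(s : ℝ) * (1 / 2 - ε)) = (2 : ℝ) ^ ((s : ℝ) * ε) * (2 : ℝ) ^ (-((s : ℝ) / 2)) := by
    rw [← Real.rpow_add (by norm_num)]; congr 1; ring
  have e2 : ((2 : ℝ) ^ (-((s : ℝ) / 2))) ^ 2 = 1 / 2 ^ s := by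
    rw [← Real.rpow_natCast, ← Real.rpow_mul (by norm_num)]
    rw [show -((s : ℝ) / 2) * ((2 : ℕ) : ℝ) = -(s : ℝ) by push_cast; ring, Real.rpow_neg (by norm_num),
      Real.rpow_natCast, one_div]
  rw [e, ← mul_assoc, mul_pow, e2, div_eq_mul_one_div]
  gcongr

/-- `ℓ²` bound for the maximal function, over `n ≥ 2^{s+4}`, of the multipliers
`Σ_{a/q ∈ S} G(χ_q, a) M̂_{2^n}^β(· − a/q) η_s(· − a/q)` for any `S ⊆ 𝓡_s`. -/
theorem stmt_14 (ε : ℝ) (hε : 0 < ε) (η : ℝ → ℝ) (hη : IsEta η) :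
    ∃ C : ℝ, 0 < C ∧
      ∀ (s : ℕ), 1 ≤ s →
        ∀ (β : ℝ), 1 / 2 ≤ β → β ≤ 1 →
          ∀ (χ : (q : ℕ) → DirichletCharacter ℂ q),
            (∀ q, 2 ^ s ≤ q → q < 2 ^ (s + 1) →
              (∀ m : ZMod q, χ q m = -1 ∨ χ q m = 0 ∨ χ q m = 1) ∧ ∃ m : ZMod q, χ q m = -1) →
            ∀ (S : Finset (ℕ × ℕ)), S ⊆ Rset s →
              ∀ (f : ℤ → ℂ), (Function.support f).Finite →
                Real.sqrt (∑' x : ℤ,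
                    (⨆ (n : ℕ) (_ : 2 ^ (s + 4) ≤ n),
                      ‖∑ p ∈ S, gaussG p.2 (χ p.2) (p.1 : ℤ) *
                        FinvInt (fun ξ =>
                          Mhat β (2 ^ n) (ξ - (p.1 : ℝ) / p.2) *
                            (etaPer η s (ξ - (p.1 : ℝ) / p.2) : ℂ) * fhat f ξ) x‖) ^ 2) ≤
                  C * (2 : ℝ) ^ (-(s : ℝ) * (1 / 2 - ε)) *
                    Real.sqrt (∑' x : ℤ, ‖f x‖ ^ 2) := by
  have hK : 0 < 1 + 1 / (ε * Real.log 2) := by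
    have := mul_pos hε (Real.log_pos (by norm_num : (1 : ℝ) < 2))
    positivity
  refine ⟨8 * (1 + 1 / (ε * Real.log 2)), by positivity, ?_⟩
  intro s hs β hβ1 hβ2 χ _ S hS f hf
  have h := sup_bound (2 ^ (s + 4)) (fun n x => ‖∑ p ∈ S, gaussG p.2 (χ p.2) (p.1 : ℤ) *
      FinvInt (fun ξ => Mhat β (2 ^ n) (ξ - (p.1 : ℝ) / p.2) *
        (etaPer η s (ξ - (p.1 : ℝ) / p.2) : ℂ) * fhat f ξ) x‖) (fun _ _ => norm_nonneg _)
      _ (fun n hn F => linearized η hη s hs β hβ1 hβ2 χ S hS f hf n hn F)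
  have hc := const_bound ε hε s
  have hf0 : 0 ≤ ∑' x : ℤ, ‖f x‖ ^ 2 := tsum_nonneg fun _ => by positivity
  apply Real.sqrt_le_iff.2
  refine ⟨by positivity, h.trans ?_⟩
  rw [mul_pow, Real.sq_sqrt hf0, ← mul_assoc]
  apply mul_le_mul_of_nonneg_right _ hf0
  calc _ ≤ 64 * ((1 + 1 / (ε * Real.log 2)) * (2 : ℝ) ^ (-(s : ℝ) * (1 / 2 - ε))) ^ 2 := by gcongr
    _ = _ := by ring
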